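/- Let V₁ and V₂ be the subalgebras of C_q[Mat_{2n,2n}] generated respectively by the entries t_{ij} with 1 ≤ i ≤ n (upper n rows) and with n+1 ≤ i ≤ 2n (lower n rows). Then the multiplication map m : V₁ ⊗ V₂ → C_q[Mat_{2n}], f ⊗ g ↦ fg, is a linear isomorphism of vector spaces. -/

import Mathlib

open TensorProduct

/-- The defining relations of the quantized coordinate algebra `C_q[Mat_N]`,
on the free algebra on generators `t_{ij}`, `(i,j) : Fin N × Fin N`. -/
inductive QMatRel (k : Type*) [Field k] (q : k) (N : ℕ) :
    FreeAlgebra k (Fin N × Fin N) → FreeAlgebra k (Fin N × Fin N) → Prop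
  | row : ∀ (i j j' : Fin N), j < j' → QMatRel k q N
      (FreeAlgebra.ι k (i, j) * FreeAlgebra.ι k (i, j'))
      (q • (FreeAlgebra.ι k (i, j') * FreeAlgebra.ι k (i, j)))
  | col : ∀ (i i' j : Fin N), i < i' → QMatRel k q N
      (FreeAlgebra.ι k (i, j) * FreeAlgebra.ι k (i', j))
      (q • (FreeAlgebra.ι k (i', j) * FreeAlgebra.ι k (i, j)))
  | anti : ∀ (i i' j j' : Fin N), i < i' → j' < j → QMatRel k q N
      (FreeAlgebra.ι k (i, j) * FreeAlgebra.ι k (i', j'))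
      (FreeAlgebra.ι k (i', j') * FreeAlgebra.ι k (i, j))
  | diag : ∀ (i i' j j' : Fin N), i < i' → j < j' → QMatRel k q N
      (FreeAlgebra.ι k (i, j) * FreeAlgebra.ι k (i', j'))
      (FreeAlgebra.ι k (i', j') * FreeAlgebra.ι k (i, j) +
        (q - q⁻¹) • (FreeAlgebra.ι k (i, j') * FreeAlgebra.ι k (i', j)))

/-- The quantized coordinate algebra `C_q[Mat_N]`. -/
abbrev QMat (k : Type*) [Field k] (q : k) (N : ℕ) := RingQuot (QMatRel k q N)

/-- The generators `t_{ij}` of `C_q[Mat_N]`. -/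
noncomputable def QMat.gen (k : Type*) [Field k] (q : k) (N : ℕ)
    (i j : Fin N) : QMat k q N :=
  RingQuot.mkAlgHom k (QMatRel k q N) (FreeAlgebra.ι k (i, j))

/-!
Write `t_i` for the `i`-th row of generators. The defining relations say that, for `i ≤ i'`, the
rows satisfy an exchange relation `κ • t_{i'} ⊗ t_i = R (t_i ⊗ t_{i'})` with one scalar matrix `R`.
For `i < i'` they therefore allow a lower generator to be moved past an upper one, and more
generally `t_{iy} f = ∑ m, φ(f)_{ym} t_{im}` for `f ∈ V₁` and every lower row `i`, where
`φ : C_q[Mat_N] → Mat_N(C_q[Mat_N])` is the algebra homomorphism extending the twist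
`t_{ij} ↦ ∑ a, R_{(p,j),(a,l)} t_{ia}`. Since `φ(f)` again has entries in `V₁`, the product `V₁ V₂`
is a left ideal containing `1`, which gives surjectivity.

For injectivity, the same formula turns `C_q[Mat_N] ⊗ C_q[Mat_N]` into a module over
`C_q[Mat_N]`: upper generators multiply the left factor, and a lower generator `t_{iy}` acts by
`f ⊗ g ↦ ∑ m, φ(f)_{ym} ⊗ t_{im} g`. Both the existence of `φ` and the relations between lower
generators reduce to the Yang–Baxter equation for `R`. Since `f ∈ V₁` and `g ∈ V₂` satisfy
`(f g) • (1 ⊗ 1) = f ⊗ g`, the product `f g` determines the tensor.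
-/

namespace QMat

section TensorProduct

open Module.End Subalgebra

theorem commute_rTensorAlgHom_lTensorAlgHom {R M M' : Type*} [CommSemiring R] [AddCommMonoid M]
    [Module R M] [AddCommMonoid M'] [Module R M'] (f : Module.End R M) (g : Module.End R M') :
    Commute (rTensorAlgHom R M M' f) (lTensorAlgHom R M' M g) :=
  (LinearMap.rTensor_comp_lTensor _ _ _).trans (LinearMap.lTensor_comp_rTensor _ _ _).symm

theorem linearDisjoint_of_map_mul_eq_tmul {k B : Type*} [Field k] [Ring B] [Algebra k B]
    {U L : Subalgebra k B} (F : B →ₗ[k] B ⊗[k] B)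
    (hF : ∀ f ∈ U, ∀ g ∈ L, F (f * g) = f ⊗ₜ g) : U.LinearDisjoint L := by
  have hcomp : F ∘ₗ (toSubmodule U).mulMap (toSubmodule L) =
      TensorProduct.mapIncl (toSubmodule U) (toSubmodule L) :=
    TensorProduct.ext' fun f g => hF f f.2 g g.2
  have hinj : Function.Injective (F ∘ₗ (toSubmodule U).mulMap (toSubmodule L)) :=
    hcomp ▸ Module.Flat.tensorProduct_mapIncl_injective_of_left _ _
  exact ⟨Function.Injective.of_comp (f := F) hinj⟩

end TensorProduct

section RMatrix

open Matrix Kronecker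

variable {k ι A B : Type*} [Fintype ι]

/-- The vector of products `u_i v_j`, a coordinate form of `u ⊗ v` for vectors with entries in an
algebra. Index pairs are ordered as the factors are. -/
def pairVec [Mul A] (u v : ι → A) : ι × ι → A := fun s => u s.1 * v s.2

theorem kronecker_mulVec_pairVec [Semiring A] {P Q : Matrix ι ι A} {u v : ι → A}
    (h : ∀ i j l, Commute (Q i j) (u l)) :
    (P ⊗ₖ Q) *ᵥ pairVec u v = pairVec (P *ᵥ u) (Q *ᵥ v) := by
  ext ⟨i, j⟩
  simp only [pairVec, dotProduct, mulVec, kroneckerMap_apply, Fintype.sum_prod_type,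
    Finset.sum_mul_sum]
  refine Finset.sum_congr rfl fun a _ => Finset.sum_congr rfl fun b _ => ?_
  exact (h j b a).mul_mul_mul_comm _ _

variable [CommSemiring k] [Semiring A] [Algebra k A] [Semiring B] [Algebra k B]

/-- The exchange relation `κ • v ⊗ u = R (u ⊗ v)` between two vectors with entries in an algebra,
where `R` is a scalar matrix. It is the form taken by the relations between two rows of a quantum
matrix. -/
def ExchangeRel (R : Matrix (ι × ι) (ι × ι) k) (κ : k) (u v : ι → A) : Prop :=
  κ • pairVec v u = R.map (algebraMap k A) *ᵥ pairVec u v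

/-- The Faddeev–Reshetikhin–Takhtajan relation `R (P ⊗ P) = (P ⊗ P) R` for a matrix `P` with entries
in an algebra. The matrix `R` is in its braid form, so no flip of the tensor factors occurs. -/
def FRTRel (R : Matrix (ι × ι) (ι × ι) k) (P : Matrix ι ι A) : Prop :=
  Commute (P ⊗ₖ P) (R.map (algebraMap k A))

variable {R : Matrix (ι × ι) (ι × ι) k} {κ : k} {u v : ι → A} {P : Matrix ι ι A}

theorem exchangeRel_iff :
    ExchangeRel R κ u v ↔
      ∀ y x, κ • (v y * u x) = ∑ s, R (y, x) s • (u s.1 * v s.2) := by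
  simp [ExchangeRel, funext_iff, pairVec, mulVec, dotProduct, Algebra.smul_def]

theorem commute_map_algebraMap_iff {σ : Type*} [Fintype σ] {M : Matrix σ σ A}
    {S : Matrix σ σ k} :
    Commute M (S.map (algebraMap k A)) ↔
      ∀ s t, ∑ r, S s r • M r t = ∑ r, S r t • M s r := by
  simp only [commute_iff_eq, ← Matrix.ext_iff, mul_apply, map_apply, Algebra.smul_def,
    ← Algebra.commutes, eq_comm]

theorem frtRel_iff :
    FRTRel R P ↔ ∀ y x c d,
      ∑ s : ι × ι, R (y, x) s • (P s.1 c * P s.2 d) =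
        ∑ s : ι × ι, R s (c, d) • (P y s.1 * P x s.2) := by
  simp only [FRTRel, commute_map_algebraMap_iff, Prod.forall, kroneckerMap_apply]

theorem ExchangeRel.map (h : ExchangeRel R κ u v) (F : A →ₐ[k] B) :
    ExchangeRel R κ (F ∘ u) (F ∘ v) := by
  rw [exchangeRel_iff] at h ⊢
  intro y x
  simpa using congr_arg F (h y x)

theorem FRTRel.map (h : FRTRel R P) (F : A →ₐ[k] B) : FRTRel R (P.map F) := by
  rw [frtRel_iff] at h ⊢
  intro y x c d
  simpa using congr_arg F (h y x c d)

theorem ExchangeRel.mulVec (h : ExchangeRel R κ u v) (hP : FRTRel R P)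
    (hu : ∀ i j l, Commute (P i j) (u l)) (hv : ∀ i j l, Commute (P i j) (v l)) :
    ExchangeRel R κ (P *ᵥ u) (P *ᵥ v) :=
  calc κ • pairVec (P *ᵥ v) (P *ᵥ u) = (P ⊗ₖ P) *ᵥ (κ • pairVec v u) := by
        rw [mulVec_smul, kronecker_mulVec_pairVec hv]
    _ = ((P ⊗ₖ P) * R.map (algebraMap k A)) *ᵥ pairVec u v := by rw [h, mulVec_mulVec]
    _ = R.map (algebraMap k A) *ᵥ ((P ⊗ₖ P) *ᵥ pairVec u v) := by rw [hP.eq, mulVec_mulVec]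
    _ = R.map (algebraMap k A) *ᵥ pairVec (P *ᵥ u) (P *ᵥ v) := by
        rw [kronecker_mulVec_pairVec hu]

theorem ExchangeRel.mulVec_right {w : ι → A} (h : ∀ j, ExchangeRel R κ u (fun i => P i j))
    (hw : ∀ i j, Commute (u i) (w j)) : ExchangeRel R κ u (P *ᵥ w) := by
  simp only [exchangeRel_iff] at h ⊢
  intro y x
  calc κ • ((P *ᵥ w) y * u x) = ∑ j, κ • (P y j * u x) * w j := by
        simp only [Matrix.mulVec, dotProduct, Finset.sum_mul, Finset.smul_sum, mul_assoc,
          (hw _ _).eq, smul_mul_assoc]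
    _ = ∑ j, (∑ s, R (y, x) s • (u s.1 * P s.2 j)) * w j := by simp only [h]
    _ = ∑ s, R (y, x) s • (u s.1 * (P *ᵥ w) s.2) := by
        simp only [Matrix.mulVec, dotProduct, Finset.mul_sum, Finset.sum_mul, Finset.smul_sum,
          mul_assoc, smul_mul_assoc]
        exact Finset.sum_comm

/-- The Yang–Baxter equation in its braid form `R₁₂ R₂₃ R₁₂ = R₂₃ R₁₂ R₂₃`, compared entrywise at
row `(p, y, x)` and column `(a, b, l)`. -/
def IsYangBaxter (R : Matrix (ι × ι) (ι × ι) k) : Prop :=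
  ∀ p y x a b l : ι,
    ∑ s : ι × ι, R (p, y) s * ∑ e, R (s.2, x) (e, l) * R (s.1, e) (a, b) =
      ∑ s : ι × ι, R (y, x) s * ∑ e, R (p, s.1) (a, e) * R (e, s.2) (b, l)

/-- The matrix `R` cut into blocks `(leftBlocks R y a)_{pl} = R_{(p,y),(a,l)}`, the coefficients of
the twist `u_y ↦ ∑ a, (leftBlocks R y a) u_a`. -/
def leftBlocks (R : Matrix (ι × ι) (ι × ι) k) : Matrix ι ι (Matrix ι ι k) :=
  of fun y a => of fun p l => R (p, y) (a, l)

theorem IsYangBaxter.frtRel_leftBlocks [DecidableEq ι] (h : IsYangBaxter R) :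
    FRTRel R (leftBlocks R) := by
  rw [frtRel_iff]
  intro y x a b
  ext p l
  simp only [Matrix.sum_apply, Matrix.smul_apply, mul_apply, leftBlocks, of_apply, smul_eq_mul]
  rw [← h]
  simp only [Fintype.sum_prod_type, Finset.mul_sum]
  refine Finset.sum_congr rfl fun i _ => ?_
  rw [Finset.sum_comm]
  exact Finset.sum_congr rfl fun j _ => Finset.sum_congr rfl fun e _ => by ring

/-- The coefficient matrix of the twist applied twice: the second twist indexes the first components
of the pairs `s`, `t`, the first twist their second components. -/
def iteratedBlock (R : Matrix (ι × ι) (ι × ι) k) (j a : ι) : Matrix (ι × ι) (ι × ι) k :=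
  of fun s t => ∑ e, R (s.2, j) (e, t.2) * R (s.1, e) (a, t.1)

theorem IsYangBaxter.commute_iteratedBlock (h : IsYangBaxter R) (j a : ι) :
    Commute (iteratedBlock R j a) R := by
  ext ⟨y, x⟩ ⟨c, d⟩
  calc ∑ s, iteratedBlock R j a (y, x) s * R s (c, d)
      = ∑ s : ι × ι, R (x, j) s * ∑ e, R (y, s.1) (a, e) * R (e, s.2) (c, d) := by
        simp only [iteratedBlock, of_apply, Finset.sum_mul, Finset.mul_sum,
          Fintype.sum_prod_type, mul_assoc]
        rw [Finset.sum_comm_cycle]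
        exact Finset.sum_congr rfl fun _ _ => Finset.sum_comm
    _ = ∑ s, R (y, x) s * iteratedBlock R j a s (c, d) := (h y x j a c d).symm

end RMatrix

section StandardRMatrix

open Matrix

variable {k ι : Type*} [Field k] [LinearOrder ι]

/-- The coefficient of the flip in the standard `R`-matrix. It is also the scalar on the left of the
exchange relation between two rows, with the row indices as arguments. -/
def swapCoeff (q : k) (y x : ι) : k := if y = x then q⁻¹ else 1

/-- The coefficient of the identity, up to sign, in the standard `R`-matrix. -/
def fixCoeff (q : k) (y x : ι) : k := if x < y then q - q⁻¹ else 0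

/-- The standard `R`-matrix of the quantized coordinate algebra of matrices, in the normalization in
which the flip of two distinct indices has coefficient `1`. The entries of the flip and of the
identity are written with `(1 : Matrix ι ι k)` as Kronecker delta. -/
def quantumR (q : k) : Matrix (ι × ι) (ι × ι) k := of fun s t =>
  (1 : Matrix ι ι k) s.1 t.2 * (1 : Matrix ι ι k) s.2 t.1 * swapCoeff q s.1 s.2 -
    (1 : Matrix ι ι k) s.1 t.1 * (1 : Matrix ι ι k) s.2 t.2 * fixCoeff q s.1 s.2

theorem quantumR_apply (q : k) (y x a b : ι) :
    quantumR q (y, x) (a, b) =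
      (1 : Matrix ι ι k) y b * (1 : Matrix ι ι k) x a * swapCoeff q y x -
        (1 : Matrix ι ι k) y a * (1 : Matrix ι ι k) x b * fixCoeff q y x :=
  rfl

variable [Fintype ι]

theorem sum_quantumR_smul {M : Type*} [AddCommGroup M] [Module k M] (q : k) (y x : ι)
    (f : ι × ι → M) :
    ∑ s, quantumR q (y, x) s • f s = swapCoeff q y x • f (x, y) - fixCoeff q y x • f (y, x) := by
  simp [quantumR, sub_smul, Fintype.sum_prod_type, one_apply, ite_smul]

theorem sum_quantumR_col_mul (q : k) (y x b : ι) (f : ι → k) :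
    ∑ a, quantumR q (y, x) (a, b) * f a =
      (1 : Matrix ι ι k) y b * swapCoeff q y x * f x -
        (1 : Matrix ι ι k) x b * fixCoeff q y x * f y := by
  simp [quantumR, sub_mul, one_apply]

theorem sum_quantumR_row_mul (q : k) (y x a : ι) (f : ι → k) :
    ∑ b, quantumR q (y, x) (a, b) * f b =
      (1 : Matrix ι ι k) x a * swapCoeff q y x * f y -
        (1 : Matrix ι ι k) y a * fixCoeff q y x * f x := by
  simp [quantumR, sub_mul, one_apply]

theorem isYangBaxter_quantumR {q : k} (hq : q ≠ 0) :
    IsYangBaxter (quantumR q : Matrix (ι × ι) (ι × ι) k) := by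
  intro p y x a b l
  have sum_mul (y x : ι) (f : ι × ι → k) : ∑ s, quantumR q (y, x) s * f s =
      swapCoeff q y x * f (x, y) - fixCoeff q y x * f (y, x) := sum_quantumR_smul q y x f
  simp only [sum_mul, sum_quantumR_row_mul, sum_quantumR_col_mul]
  simp only [quantumR_apply]
  -- With the Kronecker deltas kept atomic, each ordering of `p`, `y`, `x` leaves a field identity.
  rcases lt_trichotomy p y with h | h | h <;> rcases lt_trichotomy y x with h' | h' | h' <;>
    rcases lt_trichotomy p x with h'' | h'' | h'' <;> try order
  all_goals
    subst_vars
    simp only [swapCoeff, fixCoeff, *, lt_asymm, lt_irrefl, ne_of_lt, ne_of_gt, ↓reduceIte,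
      mul_zero, mul_one, sub_zero]
    first | ring1 | (field_simp; ring1)

end StandardRMatrix

section RowTwist

open Matrix

variable {k ι A : Type*} [Fintype ι] [CommSemiring k] [Semiring A] [Algebra k A]

/-- The twist of a vector `u` by `R`: the vector of matrices `j ↦ ∑ a, R_{(p,j),(a,l)} u_a`, with
rows `p` and columns `l`. Applied to the rows of generators it defines the homomorphism `twist`. -/
def rowTwist (R : Matrix (ι × ι) (ι × ι) k) (u : ι → A) : ι → Matrix ι ι A :=
  fun j => of fun p l => ∑ a, R (p, j) (a, l) • u a

variable [DecidableEq ι]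

theorem rowTwist_eq_mulVec (R : Matrix (ι × ι) (ι × ι) k) (u : ι → A) :
    rowTwist R u =
      (leftBlocks R).map (Algebra.ofId k A).mapMatrix *ᵥ (scalarAlgHom ι k ∘ u) := by
  ext j p l
  simp [rowTwist, leftBlocks, mulVec, dotProduct, Matrix.sum_apply, Algebra.ofId_apply,
    Algebra.smul_def]

theorem ExchangeRel.rowTwist {R : Matrix (ι × ι) (ι × ι) k} {κ : k} {u v : ι → A}
    (h : ExchangeRel R κ u v) (hR : IsYangBaxter R) :
    ExchangeRel R κ (rowTwist R u) (rowTwist R v) := by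
  have hcomm (w : ι → A) (i j l : ι) :
      Commute ((leftBlocks R).map (Algebra.ofId k A).mapMatrix i j) (scalarAlgHom ι k (w l)) := by
    ext p m
    simp [Algebra.ofId_apply, Algebra.commutes]
  rw [rowTwist_eq_mulVec, rowTwist_eq_mulVec]
  exact (h.map _).mulVec (hR.frtRel_leftBlocks.map _) (hcomm u) (hcomm v)

end RowTwist

section Presentation

variable {k : Type*} [Field k] {q : k} {N : ℕ}

/-- A family `s i j` of elements of an algebra is a quantum matrix if it satisfies the defining
relations of `QMat k q N`, expressed as exchange relations between rows. -/
def IsQuantumMatrix {B : Type*} [Semiring B] [Algebra k B] (q : k)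
    (s : Fin N → Fin N → B) : Prop :=
  ∀ i i', i ≤ i' → ExchangeRel (quantumR q) (swapCoeff q i i') (s i) (s i')

theorem isQuantumMatrix_iff {B : Type*} [Ring B] [Algebra k B] {s : Fin N → Fin N → B} :
    IsQuantumMatrix q s ↔ ∀ i i', i ≤ i' → ∀ y x, swapCoeff q i i' • (s i' y * s i x) =
      swapCoeff q y x • (s i x * s i' y) - fixCoeff q y x • (s i y * s i' x) := by
  simp only [IsQuantumMatrix, exchangeRel_iff, sum_quantumR_smul]

theorem isQuantumMatrix_gen (hq : q ≠ 0) : IsQuantumMatrix q (gen k q N) := by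
  have mk_eq {a b} (h : QMatRel k q N a b) := RingQuot.mkAlgHom_rel k h
  rw [isQuantumMatrix_iff]
  intro i i' h y x
  obtain rfl | h := h.eq_or_lt <;> obtain hx | rfl | hx := lt_trichotomy x y
  · have := mk_eq (.row i x y hx)
    simp only [map_mul, map_smul] at this
    simp only [gen, swapCoeff, fixCoeff, hx.ne', hx, if_true, if_false, this]
    module
  · simp [swapCoeff, fixCoeff]
  · have := mk_eq (.row i y x hx)
    simp only [map_mul, map_smul] at this
    simp [gen, swapCoeff, fixCoeff, hx.ne, hx.not_gt, this, smul_smul, hq]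
  · have := mk_eq (.diag i i' x y h hx)
    simp only [map_mul, map_add, map_smul] at this
    simp [gen, swapCoeff, fixCoeff, h.ne, hx.ne', hx, this]
  · have := mk_eq (.col i i' x h)
    simp only [map_mul, map_smul] at this
    simp [gen, swapCoeff, fixCoeff, h.ne, this, smul_smul, hq]
  · have := mk_eq (.anti i i' x y h hx)
    simp only [map_mul] at this
    simp [gen, swapCoeff, fixCoeff, h.ne, hx.ne, hx.not_gt, this]

theorem IsQuantumMatrix.lift_rel {B : Type*} [Semiring B] [Algebra k B] {s : Fin N → Fin N → B}
    (hs : IsQuantumMatrix q s) (hq : q ≠ 0) {a b : FreeAlgebra k (Fin N × Fin N)}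
    (h : QMatRel k q N a b) :
    FreeAlgebra.lift k (fun p => s p.1 p.2) a = FreeAlgebra.lift k (fun p => s p.1 p.2) b := by
  let : Ring B := Algebra.semiringToRing k
  rw [isQuantumMatrix_iff] at hs
  cases h with
  | row i j j' h =>
    have hrel := hs i i le_rfl j' j
    simp only [swapCoeff, fixCoeff, h.ne', h, ↓reduceIte, one_smul] at hrel
    have hrow : s i j * s i j' = (q⁻¹ + (q - q⁻¹)) • (s i j' * s i j) := by
      rw [add_smul, hrel, sub_add_cancel]
    simpa using hrow
  | col i i' j h =>
    have hrel := hs i i' h.le j j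
    simp only [swapCoeff, fixCoeff, h.ne, lt_irrefl, ↓reduceIte, one_smul, zero_smul,
      sub_zero] at hrel
    simp [hrel, smul_smul, hq]
  | anti i i' j j' h h' =>
    have hrel := hs i i' h.le j' j
    simp only [swapCoeff, fixCoeff, h.ne, h'.ne, h'.not_gt, ↓reduceIte, one_smul, zero_smul,
      sub_zero] at hrel
    simp [hrel]
  | diag i i' j j' h h' =>
    have hrel := hs i i' h.le j' j
    simp only [swapCoeff, fixCoeff, h.ne, h'.ne', h', ↓reduceIte, one_smul] at hrel
    simp [hrel]

/-- The universal property of `QMat k q N`: a quantum matrix with entries in `B` defines an algebra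
homomorphism to `B`. -/
noncomputable def lift (hq : q ≠ 0) {B : Type*} [Semiring B] [Algebra k B]
    (s : Fin N → Fin N → B) (hs : IsQuantumMatrix q s) : QMat k q N →ₐ[k] B :=
  RingQuot.liftAlgHom k ⟨FreeAlgebra.lift k fun p => s p.1 p.2, fun _ _ => hs.lift_rel hq⟩

@[simp]
theorem lift_gen (hq : q ≠ 0) {B : Type*} [Semiring B] [Algebra k B] {s : Fin N → Fin N → B}
    (hs : IsQuantumMatrix q s) (i j : Fin N) : lift hq s hs (gen k q N i j) = s i j := by
  simp [lift, gen]

@[elab_as_elim]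
theorem gen_induction {motive : QMat k q N → Prop} (f : QMat k q N)
    (algebraMap : ∀ r, motive (algebraMap k _ r)) (gen : ∀ i j, motive (gen k q N i j))
    (add : ∀ f g, motive f → motive g → motive (f + g))
    (mul : ∀ f g, motive f → motive g → motive (f * g)) : motive f := by
  obtain ⟨a, rfl⟩ := RingQuot.mkAlgHom_surjective k (QMatRel k q N) f
  induction a using FreeAlgebra.induction with
  | grade0 r => rw [AlgHom.commutes]; exact algebraMap r
  | grade1 x => exact gen x.1 x.2
  | mul a b ha hb => rw [map_mul]; exact mul _ _ ha hb
  | add a b ha hb => rw [map_add]; exact add _ _ ha hb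

end Presentation

section Twist

open Matrix

variable {k : Type*} [Field k] {q : k} {N : ℕ}

theorem isQuantumMatrix_rowTwist_gen (hq : q ≠ 0) :
    IsQuantumMatrix q fun i => rowTwist (quantumR q) (gen k q N i) :=
  fun i i' h => (isQuantumMatrix_gen hq i i' h).rowTwist (isYangBaxter_quantumR hq)

/-- The homomorphism `φ` from `QMat k q N` to matrices over itself which records how a lower row of
generators is moved past an element of the upper rows; see `gen_mul_of_mem_upperRows`. -/
noncomputable def twist (hq : q ≠ 0) :
    QMat k q N →ₐ[k] Matrix (Fin N) (Fin N) (QMat k q N) :=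
  lift hq _ (isQuantumMatrix_rowTwist_gen hq)

theorem twist_gen_apply (hq : q ≠ 0) (i j p l : Fin N) :
    twist hq (gen k q N i j) p l = ∑ a, quantumR q (p, j) (a, l) • gen k q N i a := by
  rw [twist, lift_gen, rowTwist, of_apply]

/-- The twist applied entrywise to the twist, as a homomorphism to matrices indexed by pairs. The
outer twist indexes the first component of a pair, as required by the Kronecker square in
`FRTRel`. -/
noncomputable def twistTwist (hq : q ≠ 0) :
    QMat k q N →ₐ[k] Matrix (Fin N × Fin N) (Fin N × Fin N) (QMat k q N) :=
  ((reindexAlgEquiv k _ (.prodComm _ _)).toAlgHom.comp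
    (compAlgEquiv (Fin N) (Fin N) (QMat k q N) k).toAlgHom).comp
    ((twist hq).mapMatrix.comp (twist hq))

theorem twistTwist_apply (hq : q ≠ 0) (f : QMat k q N) (s t : Fin N × Fin N) :
    twistTwist hq f s t = twist hq (twist hq f s.2 t.2) s.1 t.1 :=
  rfl

theorem twistTwist_gen_apply (hq : q ≠ 0) (i j : Fin N) (s t : Fin N × Fin N) :
    twistTwist hq (gen k q N i j) s t =
      ∑ a, iteratedBlock (quantumR q) j a s t • gen k q N i a := by
  simp only [iteratedBlock, of_apply, twistTwist_apply, twist_gen_apply, map_sum, map_smul,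
    Matrix.sum_apply, Matrix.smul_apply, Finset.smul_sum, Finset.sum_smul, smul_smul]
  exact Finset.sum_comm

theorem commute_twistTwist_gen (hq : q ≠ 0) (i j : Fin N) :
    Commute (twistTwist hq (gen k q N i j)) ((quantumR q).map (algebraMap k (QMat k q N))) := by
  let R : Matrix (Fin N × Fin N) (Fin N × Fin N) k := quantumR q
  have hR (a : Fin N) : R * iteratedBlock R j a = iteratedBlock R j a * R :=
    ((isYangBaxter_quantumR hq).commute_iteratedBlock j a).eq.symm
  rw [commute_map_algebraMap_iff]
  intro s t
  calc ∑ r, R s r • twistTwist hq (gen k q N i j) r t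
      = ∑ a, (R * iteratedBlock R j a) s t • gen k q N i a := by
        simp only [twistTwist_gen_apply, Finset.smul_sum, smul_smul, mul_apply, Finset.sum_smul]
        exact Finset.sum_comm
    _ = ∑ a, (iteratedBlock R j a * R) s t • gen k q N i a := by simp only [hR]
    _ = ∑ r, R r t • twistTwist hq (gen k q N i j) s r := by
        simp only [twistTwist_gen_apply, Finset.smul_sum, smul_smul, mul_apply, Finset.sum_smul,
          mul_comm (R _ t)]
        exact Finset.sum_comm

theorem commute_twistTwist (hq : q ≠ 0) (f : QMat k q N) :
    Commute (twistTwist hq f) ((quantumR q).map (algebraMap k (QMat k q N))) := by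
  induction f using gen_induction with
  | algebraMap r => rw [AlgHom.commutes]; exact Algebra.commute_algebraMap_left _ _
  | gen i j => exact commute_twistTwist_gen hq i j
  | add f g hf hg => rw [map_add]; exact hf.add_left hg
  | mul f g hf hg => rw [map_mul]; exact hf.mul_left hg

/-- The entries of the twist as a matrix of linear operators on `QMat k q N`. -/
noncomputable def twistEnd (hq : q ≠ 0) :
    Matrix (Fin N) (Fin N) (Module.End k (QMat k q N)) :=
  of fun p l => entryLinearMap k _ p l ∘ₗ (twist hq).toLinearMap

theorem twistEnd_apply (hq : q ≠ 0) (p l : Fin N) (f : QMat k q N) :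
    twistEnd hq p l f = twist hq f p l :=
  rfl

theorem frtRel_twistEnd (hq : q ≠ 0) :
    FRTRel (quantumR q) (twistEnd hq : Matrix (Fin N) (Fin N) (Module.End k (QMat k q N))) := by
  rw [frtRel_iff]
  intro y x c d
  ext f
  simpa [twistEnd_apply, twistTwist_apply] using
    commute_map_algebraMap_iff.1 (commute_twistTwist hq f) (y, x) (c, d)

theorem exchangeRel_lmul_gen_twistEnd (hq : q ≠ 0) (i m : Fin N) :
    ExchangeRel (quantumR q) 1 (Algebra.lmul k (QMat k q N) ∘ gen k q N i)
      (fun y => twistEnd hq y m) := by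
  rw [exchangeRel_iff]
  intro y x
  ext f
  simp only [one_smul, Function.comp_apply, Module.End.mul_apply, Algebra.coe_lmul_eq_mul,
    LinearMap.mul_apply_apply, twistEnd_apply, map_mul, mul_apply, twist_gen_apply, Finset.sum_mul,
    smul_mul_assoc, Fintype.sum_prod_type, LinearMap.sum_apply, LinearMap.smul_apply]
  exact Finset.sum_comm

end Twist

section BraidedAction

open Matrix Module.End

variable {k : Type*} [Field k] {q : k} {N : ℕ}

/-- The operators on `QMat k q N ⊗ QMat k q N` by which the generators of row `i` act when `i` is an
upper row: multiplication on the left factor. -/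
noncomputable def upperRow (i : Fin N) : Fin N → Module.End k (QMat k q N ⊗[k] QMat k q N) :=
  fun j => rTensorAlgHom k _ _ (Algebra.lmul k _ (gen k q N i j))

/-- The operators on `QMat k q N ⊗ QMat k q N` by which the generators of row `i` act when `i` is a
lower row: they pass through the left factor by the twist and then multiply the right factor. -/
noncomputable def lowerRow (hq : q ≠ 0) (i : Fin N) :
    Fin N → Module.End k (QMat k q N ⊗[k] QMat k q N) :=
  (twistEnd hq).map (rTensorAlgHom k _ _) *ᵥ
    fun m => lTensorAlgHom k _ _ (Algebra.lmul k _ (gen k q N i m))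

theorem lowerRow_tmul (hq : q ≠ 0) (i y : Fin N) (f g : QMat k q N) :
    lowerRow hq i y (f ⊗ₜ g) = ∑ m, twist hq f y m ⊗ₜ (gen k q N i m * g) := by
  simp only [lowerRow, mulVec, dotProduct, LinearMap.sum_apply]
  rfl

/-- The operators by which the generators of row `i` act on `QMat k q N ⊗ QMat k q N`, the upper
rows being the first `n` ones. -/
noncomputable def braidedRow (hq : q ≠ 0) (n : ℕ) (i : Fin N) :
    Fin N → Module.End k (QMat k q N ⊗[k] QMat k q N) :=
  if (i : ℕ) < n then upperRow i else lowerRow hq i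

theorem isQuantumMatrix_braidedRow (hq : q ≠ 0) (n : ℕ) :
    IsQuantumMatrix q (braidedRow (N := N) hq n) := by
  intro i i' h
  have hgen := isQuantumMatrix_gen hq i i' h
  unfold braidedRow
  split_ifs with hi hi' hi'
  · exact hgen.map ((rTensorAlgHom k _ _).comp (Algebra.lmul k _))
  · rw [swapCoeff, if_neg (by rintro rfl; exact hi' hi)]
    exact ExchangeRel.mulVec_right
      (fun j => (exchangeRel_lmul_gen_twistEnd hq i j).map (rTensorAlgHom k _ _))
      fun _ _ => commute_rTensorAlgHom_lTensorAlgHom _ _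
  · omega
  · exact (hgen.map ((lTensorAlgHom k _ _).comp (Algebra.lmul k _))).mulVec
      ((frtRel_twistEnd hq).map (rTensorAlgHom k _ _))
      (fun _ _ _ => commute_rTensorAlgHom_lTensorAlgHom _ _)
      fun _ _ _ => commute_rTensorAlgHom_lTensorAlgHom _ _

/-- The action of `QMat k q N` on `QMat k q N ⊗ QMat k q N` in which lower generators are braided
past the left factor. Evaluated at `1 ⊗ 1` it inverts the multiplication map
`V₁ ⊗ V₂ → QMat k q N`. -/
noncomputable def braidedAction (hq : q ≠ 0) (n : ℕ) :
    QMat k q N →ₐ[k] Module.End k (QMat k q N ⊗[k] QMat k q N) :=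
  lift hq _ (isQuantumMatrix_braidedRow hq n)

variable (k q N) in
/-- The subalgebra of `QMat k q N` generated by the entries of the first `n` rows. Rows are indexed
from `0`. -/
noncomputable def upperRows (n : ℕ) : Subalgebra k (QMat k q N) :=
  Algebra.adjoin k {x | ∃ p : Fin N × Fin N, (p.1 : ℕ) < n ∧ x = gen k q N p.1 p.2}

variable (k q N) in
/-- The subalgebra of `QMat k q N` generated by the entries of all rows but the first `n`. -/
noncomputable def lowerRows (n : ℕ) : Subalgebra k (QMat k q N) :=
  Algebra.adjoin k {x | ∃ p : Fin N × Fin N, n ≤ (p.1 : ℕ) ∧ x = gen k q N p.1 p.2}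

theorem braidedAction_of_mem_upperRows (hq : q ≠ 0) {n : ℕ} {f : QMat k q N}
    (hf : f ∈ upperRows k q N n) :
    braidedAction hq n f = rTensorAlgHom k _ _ (Algebra.lmul k _ f) := by
  refine AlgHom.adjoin_le_equalizer _ ((rTensorAlgHom k _ _).comp (Algebra.lmul k _)) ?_ hf
  rintro _ ⟨⟨i, j⟩, hi, rfl⟩
  simp [braidedAction, braidedRow, hi, upperRow]

theorem braidedAction_one_tmul_of_mem_lowerRows (hq : q ≠ 0) {n : ℕ} {g : QMat k q N}
    (hg : g ∈ lowerRows k q N n) (h : QMat k q N) :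
    braidedAction hq n g (1 ⊗ₜ h) = 1 ⊗ₜ (g * h) := by
  induction hg using Algebra.adjoin_induction generalizing h with
  | mem x hx =>
    obtain ⟨⟨i, j⟩, hi, rfl⟩ := hx
    simp [braidedAction, braidedRow, hi.not_gt, lowerRow_tmul, Matrix.one_apply,
      TensorProduct.ite_tmul]
  | algebraMap r => simp [Algebra.algebraMap_eq_smul_one]
  | add x y _ _ hx hy => simp [hx, hy, add_mul, TensorProduct.tmul_add]
  | mul x y _ _ hx hy => simp [hx, hy, mul_assoc]

theorem braidedAction_mul_one_tmul_one (hq : q ≠ 0) {n : ℕ} {f g : QMat k q N}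
    (hf : f ∈ upperRows k q N n) (hg : g ∈ lowerRows k q N n) :
    braidedAction hq n (f * g) (1 ⊗ₜ 1) = f ⊗ₜ g := by
  rw [map_mul, Module.End.mul_apply, braidedAction_one_tmul_of_mem_lowerRows hq hg,
    braidedAction_of_mem_upperRows hq hf, mul_one]
  exact congr_arg (· ⊗ₜ g) (mul_one f)

theorem linearDisjoint_upperRows_lowerRows (hq : q ≠ 0) (n : ℕ) :
    (upperRows k q N n).LinearDisjoint (lowerRows k q N n) :=
  linearDisjoint_of_map_mul_eq_tmul ((braidedAction hq n).toLinearMap.flip (1 ⊗ₜ 1))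
    fun _ hf _ hg => braidedAction_mul_one_tmul_one hq hf hg

end BraidedAction

section Straightening

open Subalgebra (toSubmodule)

variable {k : Type*} [Field k] {q : k} {N : ℕ}

theorem gen_mem_upperRows {n : ℕ} {i : Fin N} (hi : (i : ℕ) < n) (j : Fin N) :
    gen k q N i j ∈ upperRows k q N n :=
  Algebra.subset_adjoin ⟨(i, j), hi, rfl⟩

theorem gen_mem_lowerRows {n : ℕ} {i : Fin N} (hi : n ≤ (i : ℕ)) (j : Fin N) :
    gen k q N i j ∈ lowerRows k q N n :=
  Algebra.subset_adjoin ⟨(i, j), hi, rfl⟩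

theorem twist_apply_mem_upperRows (hq : q ≠ 0) {n : ℕ} {f : QMat k q N}
    (hf : f ∈ upperRows k q N n) (p l : Fin N) : twist hq f p l ∈ upperRows k q N n := by
  have hle : upperRows k q N n ≤ (upperRows k q N n).matrix.comap (twist hq) := by
    refine Algebra.adjoin_le ?_
    rintro _ ⟨⟨i, j⟩, hi, rfl⟩ p l
    refine (twist_gen_apply hq i j p l).symm ▸ ?_
    exact sum_mem fun a _ => Subalgebra.smul_mem _ (gen_mem_upperRows hi a) _
  exact hle hf p l

theorem gen_mul_gen_of_lt (hq : q ≠ 0) {i i' : Fin N} (h : i < i') (x y : Fin N) :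
    gen k q N i' y * gen k q N i x = ∑ m, twist hq (gen k q N i x) y m * gen k q N i' m := by
  have hrel := exchangeRel_iff.1 (isQuantumMatrix_gen (k := k) hq i i' h.le) y x
  rw [swapCoeff, if_neg h.ne, one_smul] at hrel
  simp only [hrel, twist_gen_apply, Finset.sum_mul, smul_mul_assoc, Fintype.sum_prod_type]
  exact Finset.sum_comm

theorem gen_mul_of_mem_upperRows (hq : q ≠ 0) {n : ℕ} {i : Fin N} (hi : n ≤ (i : ℕ))
    {f : QMat k q N} (hf : f ∈ upperRows k q N n) (y : Fin N) :
    gen k q N i y * f = ∑ m, twist hq f y m * gen k q N i m := by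
  induction hf using Algebra.adjoin_induction generalizing y with
  | mem x hx =>
    obtain ⟨⟨i', x⟩, hi', rfl⟩ := hx
    exact gen_mul_gen_of_lt hq (Fin.lt_def.2 (hi'.trans_le hi)) x y
  | algebraMap r => simp [Algebra.algebraMap_eq_smul_one, Matrix.one_apply]
  | add f g _ _ hf hg => simp [mul_add, add_mul, Finset.sum_add_distrib, hf, hg]
  | mul f g _ _ hf hg =>
    simp only [← mul_assoc, hf, map_mul, Matrix.mul_apply, Finset.sum_mul]
    simp only [mul_assoc, hg, Finset.mul_sum]
    exact Finset.sum_comm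

theorem gen_mul_mem_upperRows_mul_lowerRows (hq : q ≠ 0) {n : ℕ} (i j : Fin N) {x : QMat k q N}
    (hx : x ∈ toSubmodule (upperRows k q N n) * toSubmodule (lowerRows k q N n)) :
    gen k q N i j * x ∈ toSubmodule (upperRows k q N n) * toSubmodule (lowerRows k q N n) := by
  induction hx using Submodule.mul_induction_on' with
  | mem_mul_mem f hf g hg =>
    rw [← mul_assoc]
    obtain hi | hi := lt_or_ge (i : ℕ) n
    · exact Submodule.mul_mem_mul (Subalgebra.mul_mem _ (gen_mem_upperRows hi j) hf) hg
    · rw [gen_mul_of_mem_upperRows hq hi hf, Finset.sum_mul]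
      refine sum_mem fun m _ => ?_
      rw [mul_assoc]
      exact Submodule.mul_mem_mul (twist_apply_mem_upperRows hq hf j m)
        (Subalgebra.mul_mem _ (gen_mem_lowerRows hi m) hg)
  | add x _ y _ hx hy => rw [mul_add]; exact add_mem hx hy

theorem upperRows_mul_lowerRows (hq : q ≠ 0) (n : ℕ) :
    toSubmodule (upperRows k q N n) * toSubmodule (lowerRows k q N n) = ⊤ := by
  set M := toSubmodule (upperRows k q N n) * toSubmodule (lowerRows k q N n)
  suffices h : ∀ f, ∀ x ∈ M, f * x ∈ M from
    eq_top_iff.2 fun f _ => mul_one f ▸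
      h f 1 <| mul_one (1 : QMat k q N) ▸
        Submodule.mul_mem_mul (Subalgebra.one_mem _) (Subalgebra.one_mem _)
  intro f
  induction f using gen_induction with
  | algebraMap r => exact fun x hx => Algebra.smul_def r x ▸ M.smul_mem r hx
  | gen i j => exact fun x hx => gen_mul_mem_upperRows_mul_lowerRows hq i j hx
  | add f g hf hg => exact fun x hx => add_mul f g x ▸ M.add_mem (hf x hx) (hg x hx)
  | mul f g hf hg => exact fun x hx => mul_assoc f g x ▸ hf _ (hg x hx)

end Straightening

end QMat

theorem stmt12_general {k : Type*} [Field k] (q : k) (hq : q ≠ 0) (N n : ℕ)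
    (V₁ V₂ : Subalgebra k (QMat k q N))
    (hV₁ : V₁ = Algebra.adjoin k
      {x | ∃ p : Fin N × Fin N, (p.1 : ℕ) < n ∧ x = QMat.gen k q N p.1 p.2})
    (hV₂ : V₂ = Algebra.adjoin k
      {x | ∃ p : Fin N × Fin N, n ≤ (p.1 : ℕ) ∧ x = QMat.gen k q N p.1 p.2}) :
    Function.Bijective
      (TensorProduct.lift ((LinearMap.mul k (QMat k q N)).compl₁₂
        V₁.val.toLinearMap V₂.val.toLinearMap)) := by
  subst hV₁ hV₂
  refine ⟨(QMat.linearDisjoint_upperRows_lowerRows hq n).injective, ?_⟩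
  refine LinearMap.range_eq_top.1 ?_
  exact (Submodule.mulMap_range _ _).trans (QMat.upperRows_mul_lowerRows hq n)

/-- Let `V₁`, `V₂` be the subalgebras of `C_q[Mat_{2n}]` generated by the
entries of the upper `n` rows and of the lower `n` rows respectively. Then
the multiplication map `m : V₁ ⊗ V₂ → C_q[Mat_{2n}]`, `f ⊗ g ↦ fg`, is a
linear isomorphism of vector spaces. -/
theorem stmt12 {k : Type*} [Field k] (q : k) (hq : q ≠ 0)
    (n : ℕ) (hn : 1 ≤ n)
    (V₁ V₂ : Subalgebra k (QMat k q (2 * n)))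
    (hV₁ : V₁ = Algebra.adjoin k
      {x | ∃ p : Fin (2 * n) × Fin (2 * n), (p.1 : ℕ) < n ∧
        x = QMat.gen k q (2 * n) p.1 p.2})
    (hV₂ : V₂ = Algebra.adjoin k
      {x | ∃ p : Fin (2 * n) × Fin (2 * n), n ≤ (p.1 : ℕ) ∧
        x = QMat.gen k q (2 * n) p.1 p.2}) :
    Function.Bijective
      (TensorProduct.lift ((LinearMap.mul k (QMat k q (2 * n))).compl₁₂
        V₁.val.toLinearMap V₂.val.toLinearMap)) :=
  stmt12_general q hq (2 * n) n V₁ V₂ hV₁ hV₂
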